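/- (Very-large majority, first bound.) There exists n₀ such that for all n ≥ n₀ the following holds. Let c̄ be a k-cd for n nodes with s(c̄) ≥ n/3, attained with majority color m ∈ M(c̄). If n − c_m ≥ n^{1/4}·log n, then Pr[ C̄_{m,t+1} ≥ (17/18)·(n − c_m) | C_t = c̄ ] ≤ 1/n², where C̄_{m,t+1} = n − C_{m,t+1}. -/

import Mathlib

open Finset

/-- The color appearing at least twice among `x, y, z`, or `x` if all three are distinct. -/
def maj3 {k : ℕ} (x y z : Fin k) : Fin k := if y = z then y else x

/-- Number of nodes with color `j` in the assignment `a`. -/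
def cnt {n k : ℕ} (a : Fin n → Fin k) (j : Fin k) : ℕ :=
  (Finset.univ.filter (fun i => a i = j)).card

/-- One sample for a round of the 3-majority dynamics: each node picks three nodes
(uniformly at random, with replacement). -/
abbrev Sample (n : ℕ) := Fin n → Fin n × Fin n × Fin n

/-- The assignment obtained from `a` after one step of the 3-majority dynamics with samples `S`. -/
def stepA {n k : ℕ} (a : Fin n → Fin k) (S : Sample n) : Fin n → Fin k :=
  fun i => maj3 (a (S i).1) (a (S i).2.1) (a (S i).2.2)

/-- Probability that the event `E` holds for the configuration obtained from `a`
after one step of the 3-majority dynamics (samples are uniform and independent). -/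
noncomputable def stepPr {n k : ℕ} (a : Fin n → Fin k) (E : (Fin n → Fin k) → Prop) : ℝ :=
  (Nat.card {S : Sample n // E (stepA a S)} : ℝ) / (Nat.card (Sample n) : ℝ)

/-- Expectation of `f` of the configuration obtained from `a` after one step of the
3-majority dynamics. -/
noncomputable def stepE {n k : ℕ} (a : Fin n → Fin k) (f : (Fin n → Fin k) → ℝ) : ℝ :=
  (∑ S : Sample n, f (stepA a S)) / (Nat.card (Sample n) : ℝ)

/-- `m(c̄)`: the size of the largest color class. -/
def mval {k : ℕ} (c : Fin k → ℕ) : ℕ := Finset.univ.sup c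

/-- `M(c̄)`: the set of colors attaining the maximum. -/
def Mset {k : ℕ} (c : Fin k → ℕ) : Finset (Fin k) :=
  Finset.univ.filter (fun j => c j = mval c)

/-- `s(c̄)`: the bias, i.e. the gap between the (unique) maximum and the second largest
color class; `0` if the maximum is not unique. -/
def sval {k : ℕ} (c : Fin k → ℕ) : ℕ :=
  if (Mset c).card = 1 then mval c - (Finset.univ \ Mset c).sup c else 0

/-- `α(c̄) = (n − m(c̄))·s(c̄)/n²`. -/
noncomputable def alphaV (n : ℕ) {k : ℕ} (c : Fin k → ℕ) : ℝ :=
  ((n : ℝ) - mval c) * sval c / (n : ℝ) ^ 2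

/-- `γ(c̄) = (n·m(c̄) − Σ_h c_h²)/n² − α(c̄)`. -/
noncomputable def gammaV (n : ℕ) {k : ℕ} (c : Fin k → ℕ) : ℝ :=
  ((n : ℝ) * mval c - ∑ h, (c h : ℝ) ^ 2) / (n : ℝ) ^ 2 - alphaV n c

/-- The trajectory of the 3-majority dynamics started at `a`, driven by the samples `S`
for the first `N` rounds. -/
def trajA {n k N : ℕ} (a : Fin n → Fin k) (S : Fin N → Sample n) : ℕ → Fin n → Fin k
  | 0 => a
  | t + 1 => if h : t < N then stepA (trajA a S t) (S ⟨t, h⟩) else trajA a S t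

/-- Probability of an event `E` for an `N`-round run of the 3-majority dynamics
(all samples of all rounds are uniform and independent). -/
noncomputable def runPr {n k : ℕ} (N : ℕ) (a : Fin n → Fin k)
    (E : (Fin N → Sample n) → Prop) : ℝ :=
  (Nat.card {S : Fin N → Sample n // E S} : ℝ) / (Nat.card (Fin N → Sample n) : ℝ)

lemma cnt_real {n k : ℕ} (a : Fin n → Fin k) (j : Fin k) :
    ∑ i, (if a i = j then (1:ℝ) else 0) = cnt a j := by
  simp [cnt]

lemma ncnt_real {n k : ℕ} (a : Fin n → Fin k) (j : Fin k) :
    ∑ i, (if a i = j then (0:ℝ) else 1) = n - cnt a j := by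
  rw [← cnt_real]
  have : (n:ℝ) = ∑ i : Fin n, (1:ℝ) := by simp
  rw [this, ← Finset.sum_sub_distrib]
  refine Finset.sum_congr rfl fun i _ => ?_
  split_ifs <;> simp

lemma bad_count {n k : ℕ} (a : Fin n → Fin k) (m : Fin k) (s : ℝ)
    (hs : ∀ h, h ≠ m → (cnt a h : ℝ) ≤ cnt a m - s) :
    ∑ t : Fin n × Fin n × Fin n,
      (if maj3 (a t.1) (a t.2.1) (a t.2.2) = m then (0:ℝ) else 1)
      ≤ ((n:ℝ) - cnt a m) * ((n:ℝ)^2 - cnt a m * s) := by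
  have h1 : ∑ t : Fin n × Fin n × Fin n,
      (if maj3 (a t.1) (a t.2.1) (a t.2.2) = m then (0:ℝ) else 1)
      = ∑ y, ∑ z, ∑ x, (if maj3 (a x) (a y) (a z) = m then (0:ℝ) else 1) := by
    rw [Fintype.sum_prod_type_right, Fintype.sum_prod_type]
  have h2 : ∀ y z, ∑ x, (if maj3 (a x) (a y) (a z) = m then (0:ℝ) else 1)
      = (n - cnt a m) + (if a z = a y then
          ((if a y = m then (0:ℝ) else n) - (n - cnt a m)) else 0) := by
    intro y z
    by_cases h : a y = a z
    · by_cases h' : a z = m <;> simp [maj3, h, h']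
    · have h' : ¬ a z = a y := fun e => h e.symm
      simp only [maj3, h, h', if_false, ncnt_real, add_zero]
  have h3 : ∀ y, ∑ z, ∑ x, (if maj3 (a x) (a y) (a z) = m then (0:ℝ) else 1)
      ≤ (n - cnt a m) * n + (cnt a m * (cnt a m - s) 
        - (if a y = m then (1:ℝ) else 0) * (cnt a m * (cnt a m - s) + (n - cnt a m) * cnt a m)) := by
    intro y
    have e : ∀ X : ℝ, ∑ z, (if a z = a y then X else 0) = cnt a (a y) * X := by
      intro X
      rw [← cnt_real, Finset.sum_mul]
      exact Finset.sum_congr rfl fun z _ => by split_ifs <;> simp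
    simp only [h2, Finset.sum_add_distrib, e]
    by_cases h : a y = m
    · simp [h]; linarith
    · have := mul_le_mul_of_nonneg_right (hs _ h) (Nat.cast_nonneg (α := ℝ) (cnt a m))
      simp [h]; nlinarith
  rw [h1]
  refine (Finset.sum_le_sum fun y _ => h3 y).trans ?_
  rw [Finset.sum_add_distrib, Finset.sum_sub_distrib, ← Finset.sum_mul, ← Finset.sum_mul, ← Finset.sum_mul, cnt_real]
  simp
  apply le_of_eq; ring

lemma chernoff {n : ℕ} (f : Fin n × Fin n × Fin n → ℝ) (hf : ∀ t, f t = 0 ∨ f t = 1)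
    (hn : 0 < n) (q : ℝ) (hq : 0 ≤ q) (hB : ∑ t, f t ≤ 8 / 9 * q * (n:ℝ)^2) :
    (Nat.card {S : Sample n // ∑ i, f (S i) ≥ 17 / 18 * q} : ℝ) / (Nat.card (Sample n) : ℝ)
      ≤ Real.exp (- q / 1152) := by
  classical
  have hn' : (0:ℝ) < n := by exact_mod_cast hn
  have hcard : (Nat.card (Sample n) : ℝ) = ((n:ℝ)^3)^n := by
    simp [Sample]; ring
  rw [hcard, div_le_iff₀ (by positivity)]
  set l : ℝ := 1/32 with hl
  have he : Real.exp l ≤ 1 + l + l^2 := by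
    have := Real.abs_exp_sub_one_sub_id_le (x := l) (by rw [hl]; norm_num [abs_le])
    have := (abs_le.1 this).2
    linarith
  have he1 : 1 ≤ Real.exp l := Real.one_le_exp (by norm_num [hl])
  have hw : ∀ t, Real.exp (l * f t) = 1 + f t * (Real.exp l - 1) := by
    intro t; rcases hf t with h | h <;> simp [h]
  have hsum : ∑ t, Real.exp (l * f t) ≤ (n:ℝ)^3 * Real.exp (8/9 * q / n * (Real.exp l - 1)) := by
    simp only [hw, Finset.sum_add_distrib, ← Finset.sum_mul]
    have h1 : ∑ _t : Fin n × Fin n × Fin n, (1:ℝ) = (n:ℝ)^3 := by simp; ring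
    rw [h1]
    have h2 := Real.add_one_le_exp (8/9 * q / n * (Real.exp l - 1))
    have h3 := mul_le_mul_of_nonneg_left h2 (by positivity : (0:ℝ) ≤ (n:ℝ)^3)
    have h4 := mul_le_mul_of_nonneg_right hB (sub_nonneg.2 he1)
    refine le_trans ?_ h3
    have : (n:ℝ)^3 * (8/9 * q / n * (Real.exp l - 1) + 1)
      = (n:ℝ)^3 + 8 / 9 * q * (n:ℝ)^2 * (Real.exp l - 1) := by field_simp; ring
    linarith
  have hprod : ∑ S : Sample n, Real.exp (l * ∑ i, f (S i)) = (∑ t, Real.exp (l * f t))^n := by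
    have := Finset.prod_univ_sum (fun _ : Fin n => (Finset.univ : Finset (Fin n × Fin n × Fin n)))
      (fun _ t => Real.exp (l * f t))
    simp only [Fintype.piFinset_univ, Finset.prod_const, Finset.card_univ, Fintype.card_fin] at this
    rw [this]
    refine Finset.sum_congr rfl fun S _ => ?_
    rw [Finset.mul_sum, Real.exp_sum]
  have hmark : (Nat.card {S : Sample n // ∑ i, f (S i) ≥ 17 / 18 * q} : ℝ)
      * Real.exp (l * (17/18 * q)) ≤ ∑ S : Sample n, Real.exp (l * ∑ i, f (S i)) := by
    rw [Nat.card_eq_fintype_card, Fintype.card_subtype, ← nsmul_eq_mul]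
    refine (Finset.card_nsmul_le_sum _ (fun S : Sample n => Real.exp (l * ∑ i, f (S i))) _ ?_).trans
      (Finset.sum_le_sum_of_subset_of_nonneg (Finset.subset_univ _) fun _ _ _ => (Real.exp_pos _).le)
    intro S hS
    have := (Finset.mem_filter.1 hS).2
    exact Real.exp_le_exp.2 (mul_le_mul_of_nonneg_left this (by norm_num [hl]))
  have hpow : (∑ t, Real.exp (l * f t))^n
      ≤ ((n:ℝ)^3)^n * Real.exp (8/9 * q * (Real.exp l - 1)) := by
    refine (pow_le_pow_left₀ (Finset.sum_nonneg fun _ _ => (Real.exp_pos _).le) hsum n).trans ?_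
    rw [mul_pow, ← Real.exp_nat_mul]
    apply le_of_eq; congr 2; field_simp
  have hfin : 8/9 * q * (Real.exp l - 1) ≤ -q/1152 + l * (17/18*q) := by
    have := mul_le_mul_of_nonneg_left he (by positivity : 0 ≤ 8/9*q)
    rw [hl] at this ⊢
    linarith
  have h := (hmark.trans (hprod.le.trans hpow)).trans
    (mul_le_mul_of_nonneg_left (Real.exp_le_exp.2 hfin) (by positivity))
  rw [Real.exp_add, ← mul_assoc (((n:ℝ)^3)^n)] at h
  have := le_of_mul_le_mul_right h (Real.exp_pos _)
  linarith

/-- Lemma (very-large majority), first bound: for all sufficiently large `n`, if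
`s(c̄) ≥ n/3` with majority color `m` and `n − c_m ≥ n^{1/4}·log n`, then
`Pr[C̄_{m,t+1} ≥ (17/18)·(n − c_m) | C_t = c̄] ≤ 1/n²`. -/
theorem minority_shrinks : ∃ n₀ : ℕ, ∀ n : ℕ, n₀ ≤ n → ∀ k : ℕ, ∀ c : Fin k → ℕ,
    (∑ h, c h = n) → ∀ a : Fin n → Fin k, (∀ h, cnt a h = c h) →
    ∀ m : Fin k, m ∈ Mset c → (sval c : ℝ) ≥ (n : ℝ) / 3 →
    ((n : ℝ) - (c m : ℝ) ≥ (n : ℝ) ^ ((1 : ℝ) / 4) * Real.log n) →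
    stepPr a (fun b =>
        (n : ℝ) - (cnt b m : ℝ) ≥ 17 / 18 * ((n : ℝ) - (c m : ℝ))) ≤ 1 / (n : ℝ) ^ 2 := by
  refine ⟨2304^4, fun n hn k c hc a hac m hm hs hq => ?_⟩
  have hn0 : 0 < n := lt_of_lt_of_le (by positivity) hn
  have hnR : (0:ℝ) < n := by exact_mod_cast hn0
  have hroot : (2304:ℝ) ≤ (n:ℝ) ^ ((1:ℝ)/4) := by
    have h1 : ((2304:ℝ)^4) ≤ n := by exact_mod_cast hn
    have h2 := Real.rpow_le_rpow (by positivity) h1 (by norm_num : (0:ℝ) ≤ 1/4)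
    have h3 : ((2304:ℝ)^4) ^ ((1:ℝ)/4) = 2304 := by
      rw [← Real.rpow_natCast, ← Real.rpow_mul (by norm_num)]; norm_num
    rwa [h3] at h2
  have hlog : 0 ≤ Real.log n := Real.log_natCast_nonneg n
  have hq2 : 2304 * Real.log n ≤ (n:ℝ) - c m :=
    (mul_le_mul_of_nonneg_right hroot hlog).trans hq
  have hspos : 0 < sval c := by
    have : (0:ℝ) < sval c := lt_of_lt_of_le (by positivity) hs
    exact_mod_cast this
  have hcm : c m = mval c := (Finset.mem_filter.1 hm).2
  have hgap : ∀ h, h ≠ m → c h + sval c ≤ c m := by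
    intro h hne
    by_cases h1 : (Mset c).card = 1
    · obtain ⟨x, hx⟩ := Finset.card_eq_one.1 h1
      have hmx : m = x := by simpa [hx] using hm
      have hh : h ∈ Finset.univ \ Mset c := by simp [hx, ← hmx, hne]
      have := Finset.le_sup (f := c) hh
      have e : sval c = mval c - (Finset.univ \ Mset c).sup c := by simp [sval, h1]
      omega
    · simp [sval, h1] at hspos
  have hcs : sval c ≤ c m := by
    have : sval c ≤ mval c := by unfold sval; split_ifs <;> omega
    omega
  have hcsR : (sval c : ℝ) ≤ c m := by exact_mod_cast hcs
  have hB := bad_count a m (sval c) (by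
    intro h hne
    have : ((c h : ℝ)) + sval c ≤ c m := by exact_mod_cast hgap h hne
    rw [hac, hac]; linarith)
  rw [hac] at hB
  have hq0 : 0 ≤ (n:ℝ) - c m := le_trans (by positivity) hq2
  have hch := chernoff (fun t : Fin n × Fin n × Fin n =>
      if maj3 (a t.1) (a t.2.1) (a t.2.2) = m then (0:ℝ) else 1)
    (fun t => by split_ifs <;> simp) hn0 _ hq0 (by
      refine hB.trans ?_
      have h1 : (n:ℝ)/3 * (n/3) ≤ c m * sval c :=
        mul_le_mul (hs.le.trans hcsR) hs (by positivity) (by positivity)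
      have := mul_le_mul_of_nonneg_left
        (by linarith : (n:ℝ)^2 - c m * sval c ≤ 8/9 * (n:ℝ)^2) hq0
      linarith)
  have hev : ∀ S : Sample n, ∑ i, (if maj3 (a (S i).1) (a (S i).2.1) (a (S i).2.2) = m
      then (0:ℝ) else 1) = n - cnt (stepA a S) m := fun S => ncnt_real (stepA a S) m
  simp only [hev] at hch
  refine hch.trans ?_
  have : (1:ℝ) / (n:ℝ)^2 = Real.exp (-(2 * Real.log n)) := by
    rw [Real.exp_neg, two_mul, Real.exp_add, Real.exp_log hnR, one_div, sq]
  rw [this]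
  exact Real.exp_le_exp.2 (by linarith)
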